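/- arXiv:1602.01021 — 2 statements merged into one kernel-verified Lean document; each statement's English description precedes it below -/
import Mathlib

section
/- Integrality of the first Chern number of a smooth family of projections on the two-torus: let b₁, b₂ ∈ ℝ² be linearly independent, N ≥ 1, and let P : ℝ² → M_N(ℂ) be a C^∞ map satisfying P(k + b₁) = P(k) and P(k + b₂) = P(k) for all k, P(k)² = P(k), and P(k)* = P(k) (conjugate transpose). Then the Chern number C₁ := (1/(2πi)) ∫_B Tr( P(k) [∂₁P(k), ∂₂P(k)] ) dk is an integer, where B = {s₁b₁ + s₂b₂ : s₁, s₂ ∈ [0,1)} is a fundamental domain, ∂_i denotes the partial derivative in the i-th Cartesian coordinate of k, and [A, B] = AB − BA. -/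
open Real Complex MeasureTheory Matrix

attribute [local instance] Matrix.normedAddCommGroup Matrix.normedSpace

open Filter Topology Set

/-- Global solvability of a linear ODE with bounded continuous coefficients, by the Dyson series. -/
theorem exists_linearODE_solution {E : Type*} [NormedAddCommGroup E] [NormedSpace ℝ E]
    [CompleteSpace E] {L : ℝ → E →L[ℝ] E} (hL : Continuous L) {C : ℝ} (hC : ∀ s, ‖L s‖ ≤ C)
    (x : E) :
    ∃ u : ℝ → E, u 0 = x ∧ (∀ s, HasDerivAt u (L s (u s)) s) ∧
      ∀ s, ‖u s‖ ≤ ‖x‖ * Real.exp (C * |s|) := by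
  have hC0 : 0 ≤ C := (norm_nonneg _).trans (hC 0)
  let d : ℕ → ℝ → E := fun n => Nat.rec (fun _ => x) (fun _ f s => ∫ σ in (0 : ℝ)..s, L σ (f σ)) n
  have d_succ : ∀ n s, d (n + 1) s = ∫ σ in (0 : ℝ)..s, L σ (d n σ) := fun n s => rfl
  have d_cont : ∀ n, Continuous (d n) := by
    intro n
    induction n with
    | zero => exact continuous_const
    | succ n ih =>
      exact intervalIntegral.continuous_primitive
        (fun a b => (hL.clm_apply ih).intervalIntegrable a b) 0
  have d_deriv : ∀ n s, HasDerivAt (d (n + 1)) (L s (d n s)) s := fun n s =>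
    intervalIntegral.integral_hasDerivAt_right ((hL.clm_apply (d_cont n)).intervalIntegrable 0 s)
      ((hL.clm_apply (d_cont n)).stronglyMeasurableAtFilter _ _) (hL.clm_apply (d_cont n)).continuousAt
  have d_bound : ∀ n s, ‖d n s‖ ≤ ‖x‖ * ((C * |s|) ^ n / n.factorial) := by
    intro n
    induction n with
    | zero => intro s; simp [d]
    | succ n ih =>
      intro s
      rw [d_succ]
      have hb : ∀ σ, ‖L σ (d n σ)‖ ≤ C ^ (n + 1) * ‖x‖ / n.factorial * |σ - 0| ^ n := by
        intro σ
        calc ‖L σ (d n σ)‖ ≤ C * (‖x‖ * ((C * |σ|) ^ n / n.factorial)) :=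
              (L σ).le_of_opNorm_le_of_le (hC σ) (ih σ)
          _ = _ := by rw [sub_zero]; ring
      refine (intervalIntegral.norm_integral_le_abs_of_norm_le
        (g := fun σ => C ^ (n + 1) * ‖x‖ / n.factorial * |σ - 0| ^ n)
        (Eventually.of_forall hb)
        (Continuous.intervalIntegrable (by fun_prop) _ _)).trans (le_of_eq ?_)
      rw [intervalIntegral.integral_const_mul, abs_mul, intervalIntegral.abs_intervalIntegral_eq,
        integral_pow_abs_sub_uIoc, abs_of_nonneg (by positivity), abs_of_nonneg (by positivity),
        Nat.factorial_succ, sub_zero]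
      push_cast
      field_simp
      ring
  have d_sum : ∀ s, Summable fun n => d n s := fun s =>
    .of_norm_bounded ((Real.summable_pow_div_factorial (C * |s|)).mul_left ‖x‖) fun n => d_bound n s
  refine ⟨fun s => ∑' n, d n s, ?_, fun s => ?_, fun s => ?_⟩
  · change ∑' n, d n 0 = x
    rw [(d_sum 0).tsum_eq_zero_add]
    simp [d]
  · let g' : ℕ → ℝ → E := fun n s => Nat.casesOn n 0 (fun n => L s (d n s))
    let v : ℕ → ℝ := fun n =>
      Nat.casesOn n 0 (fun n => C * (‖x‖ * ((C * (|s| + 1)) ^ n / n.factorial)))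
    have hv : Summable v := by
      rw [← summable_nat_add_iff 1]
      exact ((Real.summable_pow_div_factorial (C * (|s| + 1))).mul_left ‖x‖).mul_left C
    have key := hasDerivAt_tsum_of_isPreconnected (𝕜 := ℝ) (g := d) (g' := g') (y₀ := s) (y := s)
      hv (isOpen_Ioo (a := -(|s| + 1)) (b := |s| + 1)) isPreconnected_Ioo
      (fun n y _ => by
        cases n with
        | zero => exact hasDerivAt_const y x
        | succ n => exact d_deriv n y)
      (fun n y hy => by
        cases n with
        | zero => simp [g', v]
        | succ n =>
          have hy' : |y| ≤ |s| + 1 := abs_le.2 ⟨hy.1.le, hy.2.le⟩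
          refine (L y).le_of_opNorm_le_of_le (hC y) ((d_bound n y).trans ?_)
          gcongr)
      ⟨by linarith [neg_abs_le s], by linarith [le_abs_self s]⟩ (d_sum s)
      ⟨by linarith [neg_abs_le s], by linarith [le_abs_self s]⟩
    convert key using 1
    have hg : Summable fun n => g' n s := by
      rw [← summable_nat_add_iff 1]
      exact (d_sum s).mapL (L s)
    rw [hg.tsum_eq_zero_add, (L s).map_tsum (d_sum s)]
    simp [g']
  · refine tsum_of_norm_bounded ?_ fun n => d_bound n s
    rw [Real.exp_eq_exp_ℝ]
    exact (NormedSpace.expSeries_div_hasSum_exp (C * |s|)).mul_left _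

theorem HasDerivAt.eq_of_isIdempotent {A : Type*} [NormedRing A] [NormedAlgebra ℝ A]
    {q : ℝ → A} {q' : A} {t : ℝ}
    (h : HasDerivAt q q' t)
    (hq : ∀ t, q t * q t = q t) : q' = q' * q t + q t * q' := by
  have h2 := h.fun_mul h
  simp only [hq] at h2
  exact h.unique h2

theorem mul_mul_eq_zero_of_derivation {R : Type*} [Ring R] {q q' : R} (hq : q * q = q)
    (h : q' = q' * q + q * q') : q * q' * q = 0 := by
  have h1 : q' * q = q' * q + q * q' * q := by
    conv_lhs => rw [h, add_mul, mul_assoc, hq]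
  simpa using h1

/-- The propagator of `[∂ₛQ, Q]` intertwines the idempotents `Q`. -/
theorem propagator_intertwines {A : Type*} [NormedRing A] [NormedAlgebra ℝ A]
    {Q Qs U V : ℝ → A} (hQ : ∀ s, Q s * Q s = Q s)
    (hQs : ∀ s, HasDerivAt Q (Qs s) s) (hU0 : U 0 = 1)
    (hU : ∀ s, HasDerivAt U ((Qs s * Q s - Q s * Qs s) * U s) s)
    (hV : ∀ s, HasDerivAt V (-(V s * (Qs s * Q s - Q s * Qs s))) s) (hVU : ∀ s, V s * U s = 1)
    (hUV : ∀ s, U s * V s = 1) (s : ℝ) : Q s * U s = U s * Q 0 := by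
  have hd : ∀ s, HasDerivAt (fun s => V s * Q s * U s) 0 s := fun s => by
    have h1 := (hQs s).eq_of_isIdempotent hQ
    have h0 := mul_mul_eq_zero_of_derivation (hQ s) h1
    convert ((hV s).fun_mul (hQs s)).fun_mul (hU s) using 1
    have h2 : (0 : A) = V s * (Qs s - (Qs s * Q s + Q s * Qs s) +
        Q s * Qs s * Q s + Q s * Qs s * Q s) * U s := by
      rw [← h1, h0]; simp
    rw [h2]
    have e1 : -(V s * (Qs s * Q s - Q s * Qs s)) * Q s * U s
        = -(V s * (Qs s * (Q s * Q s) - Q s * Qs s * Q s) * U s) := by noncomm_ring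
    have e2 : V s * Q s * ((Qs s * Q s - Q s * Qs s) * U s)
        = V s * (Q s * Qs s * Q s - (Q s * Q s) * Qs s) * U s := by noncomm_ring
    rw [add_mul, e1, e2, hQ]
    noncomm_ring
  have := is_const_of_deriv_eq_zero (fun s => (hd s).differentiableAt) (fun s => (hd s).deriv) s 0
  have hV0 : V 0 = 1 := by simpa [hU0] using hVU 0
  simp only [hU0, hV0, one_mul, mul_one] at this
  rw [← this, mul_assoc, ← mul_assoc (U s), hUV, one_mul]

theorem exists_bound_of_periodic {E : Type*} [NormedAddCommGroup E] {f : ℝ → ℝ → E}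
    (hf : Continuous fun p : ℝ × ℝ => f p.1 p.2)
    (h₁ : ∀ s t, f (s + 1) t = f s t) (h₂ : ∀ s t, f s (t + 1) = f s t) :
    ∃ C, ∀ s t, ‖f s t‖ ≤ C := by
  obtain ⟨C, hC⟩ := (isCompact_Icc.prod isCompact_Icc).exists_bound_of_continuousOn
    (s := Icc (0 : ℝ) 1 ×ˢ Icc (0 : ℝ) 1) hf.continuousOn
  refine ⟨C, fun s t => ?_⟩
  have e₁ : ∀ t, Function.Periodic (f · t) 1 := fun t s => h₁ s t
  have e₂ : ∀ s, Function.Periodic (f s) 1 := fun s t => h₂ s t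
  have := hC (Int.fract s, Int.fract t)
    ⟨⟨Int.fract_nonneg s, (Int.fract_lt_one s).le⟩, ⟨Int.fract_nonneg t, (Int.fract_lt_one t).le⟩⟩
  have a := (e₂ (Int.fract s)).sub_int_mul_eq ⌊t⌋ (x := t)
  have b := (e₁ t).sub_int_mul_eq ⌊s⌋ (x := s)
  simp only [mul_one, Int.self_sub_floor] at a b
  rwa [a, b] at this

section Transport

variable {A : Type*} [NormedRing A] [NormedAlgebra ℝ A] [CompleteSpace A]

/-- The propagator `U` of `u' = K u` together with its left inverse `V`. -/
theorem exists_propagator {K : ℝ → A} (hK : Continuous K) {C : ℝ} (hC : ∀ s, ‖K s‖ ≤ C) :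
    ∃ U V : ℝ → A, U 0 = 1 ∧ (∀ s, HasDerivAt U (K s * U s) s) ∧
      (∀ s, HasDerivAt V (-(V s * K s)) s) ∧ (∀ s, V s * U s = 1) ∧ 
      (∀ s, ‖U s‖ ≤ ‖(1 : A)‖ * Real.exp (C * |s|)) ∧
      ∀ s, ‖V s‖ ≤ ‖(1 : A)‖ * Real.exp (C * |s|) := by
  obtain ⟨U, hU0, hU, hUb⟩ := exists_linearODE_solution
    (L := fun s => ContinuousLinearMap.mul ℝ A (K s)) (by fun_prop)
    (fun s => (ContinuousLinearMap.opNorm_mul_apply_le ℝ A (K s)).trans (hC s)) 1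
  obtain ⟨V, hV0, hV, hVb⟩ := exists_linearODE_solution
    (L := fun s => (ContinuousLinearMap.mul ℝ A).flip (-K s)) (by fun_prop)
    (C := C) (fun s => ContinuousLinearMap.opNorm_le_bound _ ((norm_nonneg _).trans (hC s))
      fun y => by
        rw [ContinuousLinearMap.flip_apply, ContinuousLinearMap.mul_apply', mul_comm C]
        refine (norm_mul_le _ _).trans ?_
        rw [norm_neg]
        gcongr
        exact hC s) 1
  have hU' : ∀ s, HasDerivAt U (K s * U s) s := fun s => by simpa using hU s
  have hV' : ∀ s, HasDerivAt V (-(V s * K s)) s := fun s => by simpa using hV s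
  refine ⟨U, V, hU0, hU', hV', fun s => ?_, hUb, hVb⟩
  have hd : ∀ s, HasDerivAt (fun s => V s * U s) 0 s := fun s => by
    convert (hV' s).fun_mul (hU' s) using 1
    noncomm_ring
  have := is_const_of_deriv_eq_zero (fun s => (hd s).differentiableAt) (fun s => (hd s).deriv) s 0
  simpa [hU0, hV0] using this

variable {K Kt U V : ℝ → ℝ → A}

/-- Duhamel's formula comparing the propagators at two parameters. -/
theorem propagator_duhamel (hK : Continuous fun p : ℝ × ℝ => K p.1 p.2)
    (hU0 : ∀ t, U 0 t = 1) (hU : ∀ t s, HasDerivAt (U · t) (K s t * U s t) s)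
    (hV : ∀ t s, HasDerivAt (V · t) (-(V s t * K s t)) s) (hVU : ∀ s t, V s t * U s t = 1)
    (s t t' : ℝ) :
    V s t * U s t' - 1 = ∫ σ in (0 : ℝ)..s, V σ t * (K σ t' - K σ t) * U σ t' := by
  have cU : ∀ t, Continuous (U · t) := fun t =>
    continuous_iff_continuousAt.2 fun s => (hU t s).continuousAt
  have cV : ∀ t, Continuous (V · t) := fun t =>
    continuous_iff_continuousAt.2 fun s => (hV t s).continuousAt
  have cK : ∀ t, Continuous (K · t) := fun t => hK.comp (Continuous.prodMk_left t)
  have hd : ∀ σ, HasDerivAt (fun σ => V σ t * U σ t')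
      (V σ t * (K σ t' - K σ t) * U σ t') σ := fun σ => by
    convert (hV t σ).fun_mul (hU t' σ) using 1
    noncomm_ring
  have hV0 : V 0 t = 1 := by simpa [hU0] using hVU 0 t
  rw [intervalIntegral.integral_eq_sub_of_hasDerivAt (fun σ _ => hd σ)
    ((((cV t).mul ((cK t').sub (cK t))).mul (cU t')).intervalIntegrable 0 s), hU0, hV0, mul_one]

theorem tendsto_propagator (hK : Continuous fun p : ℝ × ℝ => K p.1 p.2)
    (hU0 : ∀ t, U 0 t = 1) (hU : ∀ t s, HasDerivAt (U · t) (K s t * U s t) s)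
    (hV : ∀ t s, HasDerivAt (V · t) (-(V s t * K s t)) s) (hVU : ∀ s t, V s t * U s t = 1)
    (hUV : ∀ s t, U s t * V s t = 1) {C B : ℝ} (hC : ∀ s t, ‖K s t‖ ≤ C)
    (hUB : ∀ s ∈ Icc (0 : ℝ) 1, ∀ t, ‖U s t‖ ≤ B) (hVB : ∀ s ∈ Icc (0 : ℝ) 1, ∀ t, ‖V s t‖ ≤ B)
    {s : ℝ} (hs : s ∈ Icc (0 : ℝ) 1) (t : ℝ) : Tendsto (U s) (𝓝 t) (𝓝 (U s t)) := by
  have cU : ∀ t, Continuous (U · t) := fun t =>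
    continuous_iff_continuousAt.2 fun s => (hU t s).continuousAt
  have cV : ∀ t, Continuous (V · t) := fun t =>
    continuous_iff_continuousAt.2 fun s => (hV t s).continuousAt
  have cK : ∀ t, Continuous (K · t) := fun t => hK.comp (Continuous.prodMk_left t)
  have hB0 : 0 ≤ B := (norm_nonneg _).trans (hUB s hs t)
  have hsub : ∀ σ ∈ uIoc 0 s, σ ∈ Icc (0 : ℝ) 1 := fun σ hσ => by
    rw [uIoc_of_le hs.1] at hσ
    exact ⟨hσ.1.le, hσ.2.trans hs.2⟩
  have hbd : ∀ t', ∀ σ ∈ uIoc 0 s,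
      ‖V σ t * (K σ t' - K σ t) * U σ t'‖ ≤ B * ‖K σ t' - K σ t‖ * B := fun t' σ hσ => by
    refine (norm_mul_le _ _).trans ?_
    gcongr
    · refine (norm_mul_le _ _).trans ?_
      gcongr
      exact hVB σ (hsub σ hσ) t
    · exact hUB σ (hsub σ hσ) t'
  have hlim : Tendsto (fun t' => ∫ σ in (0 : ℝ)..s, V σ t * (K σ t' - K σ t) * U σ t') (𝓝 t)
      (𝓝 (∫ σ in (0 : ℝ)..s, (0 : A))) := by
    refine intervalIntegral.tendsto_integral_filter_of_dominated_convergence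
      (fun _ => B * (C + C) * B)
      (Eventually.of_forall fun t' =>
        (((cV t).mul ((cK t').sub (cK t))).mul (cU t')).aestronglyMeasurable)
      (Eventually.of_forall fun t' => Eventually.of_forall fun σ hσ => (hbd t' σ hσ).trans ?_)
      intervalIntegrable_const
      (Eventually.of_forall fun σ hσ => ?_)
    · gcongr
      exact (norm_sub_le _ _).trans (add_le_add (hC σ t') (hC σ t))
    · refine squeeze_zero_norm (fun t' => hbd t' σ hσ) ?_
      have : Continuous fun t' => B * ‖K σ t' - K σ t‖ * B := by
        have := hK.comp (Continuous.prodMk_right σ)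
        have h2 : Continuous fun t' => K σ t' := this
        fun_prop
      simpa using this.tendsto t
  have h1 : ∀ t', U s t' = U s t * (1 + ∫ σ in (0 : ℝ)..s, V σ t * (K σ t' - K σ t) * U σ t') := by
    intro t'
    rw [← propagator_duhamel hK hU0 hU hV hVU, add_sub_cancel, ← mul_assoc, hUV, one_mul]
  have h2 := (hlim.const_add 1).const_mul (U s t)
  simp only [intervalIntegral.integral_zero, add_zero, mul_one] at h2
  exact h2.congr fun t' => (h1 t').symm

/-- Differentiability of the propagator in the parameter; the logarithmic derivative `Z` is the
integral of the conjugates of `∂ₜK`, here tested against continuous functionals. -/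
theorem hasDerivAt_propagator (hK : Continuous fun p : ℝ × ℝ => K p.1 p.2)
    (cKt : Continuous fun p : ℝ × ℝ => Kt p.1 p.2)
    (hKt : ∀ s t, HasDerivAt (K s) (Kt s t) t)
    (hU0 : ∀ t, U 0 t = 1) (hU : ∀ t s, HasDerivAt (U · t) (K s t * U s t) s)
    (hV : ∀ t s, HasDerivAt (V · t) (-(V s t * K s t)) s) (hVU : ∀ s t, V s t * U s t = 1)
    (hUV : ∀ s t, U s t * V s t = 1) {C D B : ℝ} (hC : ∀ s t, ‖K s t‖ ≤ C)
    (hD : ∀ s t, ‖Kt s t‖ ≤ D)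
    (hUB : ∀ s ∈ Icc (0 : ℝ) 1, ∀ t, ‖U s t‖ ≤ B) (hVB : ∀ s ∈ Icc (0 : ℝ) 1, ∀ t, ‖V s t‖ ≤ B)
    (t : ℝ) :
    ∃ Z : A, HasDerivAt (U 1) (U 1 t * Z) t ∧
      ∀ τ : A →L[ℝ] ℂ, τ Z = ∫ s in (0 : ℝ)..1, τ (V s t * Kt s t * U s t) := by
  have cU : ∀ t, Continuous (U · t) := fun t =>
    continuous_iff_continuousAt.2 fun s => (hU t s).continuousAt
  have cV : ∀ t, Continuous (V · t) := fun t =>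
    continuous_iff_continuousAt.2 fun s => (hV t s).continuousAt
  have cK : ∀ t, Continuous (K · t) := fun t => hK.comp (Continuous.prodMk_left t)
  have hB0 : 0 ≤ B := (norm_nonneg _).trans (hUB 0 (by simp) t)
  have hD0 : 0 ≤ D := (norm_nonneg _).trans (hD 0 0)
  have hsub : ∀ σ ∈ uIoc (0 : ℝ) 1, σ ∈ Icc (0 : ℝ) 1 := fun σ hσ => by
    rw [uIoc_of_le zero_le_one] at hσ
    exact ⟨hσ.1.le, hσ.2⟩
  have hslope : ∀ σ t', ‖slope (K σ) t t'‖ ≤ D := fun σ t' => by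
    rw [slope_def_module, norm_smul, norm_inv]
    have := convex_univ.norm_image_sub_le_of_norm_hasDerivWithin_le (f := K σ) (f' := Kt σ)
      (fun y _ => (hKt σ y).hasDerivWithinAt) (fun y _ => hD σ y) (mem_univ t) (mem_univ t')
    rcases eq_or_ne t' t with rfl | h
    · simpa using hD0
    · rw [inv_mul_le_iff₀ (norm_pos_iff.2 (sub_ne_zero.2 h)), mul_comm]
      exact this
  have hlim : Tendsto (fun t' => ∫ σ in (0 : ℝ)..1, V σ t * slope (K σ) t t' * U σ t') (𝓝[≠] t)
      (𝓝 (∫ σ in (0 : ℝ)..1, V σ t * Kt σ t * U σ t)) := by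
    refine intervalIntegral.tendsto_integral_filter_of_dominated_convergence
      (fun _ => B * D * B)
      (Eventually.of_forall fun t' => ?_)
      (Eventually.of_forall fun t' => Eventually.of_forall fun σ hσ => ?_)
      intervalIntegrable_const
      (Eventually.of_forall fun σ hσ => ?_)
    · simp only [slope_def_module]
      exact (((cV t).mul (((cK t').sub (cK t)).const_smul _)).mul (cU t')).aestronglyMeasurable
    · refine (norm_mul_le _ _).trans (mul_le_mul ((norm_mul_le _ _).trans ?_)
        (hUB σ (hsub σ hσ) t') (norm_nonneg _) (by positivity))
      exact mul_le_mul (hVB σ (hsub σ hσ) t) (hslope σ t') (norm_nonneg _) hB0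
    · refine ((hasDerivAt_iff_tendsto_slope.1 (hKt σ t)).const_mul _).mul ?_
      exact (tendsto_propagator hK hU0 hU hV hVU hUV hC hUB hVB (hsub σ hσ) t).mono_left
        nhdsWithin_le_nhds
  have h : HasDerivAt (fun t' => V 1 t * U 1 t')
      (∫ s in (0 : ℝ)..1, V s t * Kt s t * U s t) t := by
    rw [hasDerivAt_iff_tendsto_slope]
    refine hlim.congr fun t' => ?_
    rw [slope_def_module, hVU, propagator_duhamel hK hU0 hU hV hVU,
      ← intervalIntegral.integral_smul]
    refine intervalIntegral.integral_congr fun σ _ => ?_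
    simp [slope_def_module]
  refine ⟨_, (h.const_mul (U 1 t)).congr_of_eventuallyEq (Eventually.of_forall fun t' => ?_),
    fun τ => (τ.intervalIntegral_comp_comm (Continuous.intervalIntegrable ?_ 0 1)).symm⟩
  · simp only [← mul_assoc, hUV, one_mul]
  · exact ((cV t).mul (cKt.comp (Continuous.prodMk_left t))).mul (cU t)

end Transport

section MatrixCase

open scoped Matrix.Norms.Operator

variable {n : Type*} [Fintype n] [DecidableEq n]

theorem hasDerivAt_det_of_eq_one {G : ℝ → Matrix n n ℂ} {G' : Matrix n n ℂ} {t : ℝ}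
    (hG : HasDerivAt G G' t) (h1 : G t = 1) : HasDerivAt (fun t => (G t).det) G'.trace t := by
  have key : ∀ (H : ℝ → Matrix n n ℂ) (t : ℝ), H t = 1 → (∀ i j, HasDerivAt (H · i j) (G' i j) t) →
      HasDerivAt (fun t => (H t).det) (∑ σ : Equiv.Perm n, (Equiv.Perm.sign σ : ℂ) *
        ∑ i, (∏ j ∈ Finset.univ.erase i, (1 : Matrix n n ℂ) (σ j) j) • G' (σ i) i) t := by
    intro H t hH hd
    simp only [Matrix.det_apply']
    refine HasDerivAt.fun_sum fun σ _ => HasDerivAt.const_mul _ ?_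
    rw [← hH]
    exact HasDerivAt.fun_finsetProd fun i _ => hd (σ i) i
  have hline := key (fun r => 1 + (r : ℂ) • G') 0 (by simp) fun i j => by
    simp only [Matrix.add_apply, Matrix.smul_apply, smul_eq_mul]
    simpa using (Complex.ofRealCLM.hasDerivAt (x := 0)).mul_const (G' i j)
  have htrace : HasDerivAt (fun r : ℝ => (1 + (r : ℂ) • G').det) G'.trace 0 := by
    have := ((Matrix.det (1 + (Polynomial.X : Polynomial ℂ) •
      G'.map Polynomial.C)).hasDerivAt ((0 : ℝ) : ℂ)).comp_ofReal
    rw [Complex.ofReal_zero, Matrix.derivative_det_one_add_X_smul] at this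
    refine this.congr_of_eventuallyEq (Eventually.of_forall fun r => ?_)
    simp only [← Polynomial.coe_evalRingHom, RingHom.map_det]
    congr 1
    ext i j
    by_cases h : i = j <;> simp [h] <;> exact mul_comm _ _
  rw [htrace.unique hline]
  exact key G t h1 fun i j => hasDerivAt_pi.1 (hasDerivAt_pi.1 hG i) j

/-- Jacobi's formula for the derivative of a determinant. -/
theorem hasDerivAt_det {M : ℝ → Matrix n n ℂ} {M' W : Matrix n n ℂ} {t : ℝ}
    (hM : HasDerivAt M M' t) (hW : W * M t = 1) :
    HasDerivAt (fun t => (M t).det) ((W * M').trace * (M t).det) t := by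
  have h := (hasDerivAt_det_of_eq_one (hM.const_mul W) hW).mul_const (M t).det
  refine h.congr_of_eventuallyEq (Eventually.of_forall fun t' => ?_)
  have hdet : W.det * (M t).det = 1 := by rw [← Matrix.det_mul, hW, Matrix.det_one]
  simp only [Matrix.det_mul]
  linear_combination (-(M t').det) * hdet

theorem holonomy_inv_mul {R : Type*} [Ring R] {q u v : R} (hq : q * q = q)
    (hu : q * u = u * q) (hv : q * v = v * q) (hvu : v * u = 1) :
    (1 - q + q * v) * (1 - q + q * u) = 1 := by
  have e1 : q * v * q = q * v := by rw [hv, mul_assoc, hq]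
  have e2 : q * v * (q * u) = q := by
    rw [← mul_assoc, e1, hv, mul_assoc, hu, ← mul_assoc, hvu, one_mul]
  have e3 : q * (q * u) = q * u := by rw [← mul_assoc, hq]
  simp only [add_mul, mul_add, sub_mul, mul_sub, one_mul, mul_one, e1, e2, e3, hq]
  abel

theorem trace_logDeriv_holonomy {q q' u v z : Matrix n n ℂ} (hq : q * q = q)
    (hq' : q' = q' * q + q * q') (hu : q * u = u * q) (hv : q * v = v * q) (hvu : v * u = 1) :
    ((1 - q + q * v) * (-q' + (q' * u + q * (u * z)))).trace = (q * z).trace := by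
  have h0 := mul_mul_eq_zero_of_derivation hq hq'
  have huv : u * v = 1 := mul_eq_one_comm.1 hvu
  have hc : (1 - q) * q' * (1 - q) = 0 := by
    have : (1 - q) * q' * (1 - q) = q' - (q' * q + q * q') + q * q' * q := by noncomm_ring
    rw [this, ← hq', h0]; simp
  have t0 : (q * q').trace = 0 := by
    rw [← hq, mul_assoc, Matrix.trace_mul_comm, h0, Matrix.trace_zero]
  have t0' : (q' * q).trace = 0 := by rw [Matrix.trace_mul_comm, t0]
  have t1 : q'.trace = 0 := by rw [hq', Matrix.trace_add, t0, t0', add_zero]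
  have t2 : ((1 - q) * q' * u).trace = 0 := by
    have hp : (1 - q) * (1 - q) = 1 - q := by
      have : (1 - q) * (1 - q) = 1 - q - q + q * q := by noncomm_ring
      rw [this, hq]; abel
    have hup : u * (1 - q) = (1 - q) * u := by rw [mul_sub, sub_mul, hu]; simp
    rw [← hp, mul_assoc, mul_assoc, Matrix.trace_mul_comm, mul_assoc, mul_assoc, hup,
      ← mul_assoc q', ← mul_assoc, ← mul_assoc, hc, zero_mul, Matrix.trace_zero]
  have t4 : (q * v * q').trace = 0 := by
    rw [← hq, mul_assoc, mul_assoc, Matrix.trace_mul_comm, ← mul_assoc, hv, mul_assoc v,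
      mul_assoc v, h0, mul_zero, Matrix.trace_zero]
  have t5 : (q * v * (q' * u)).trace = 0 := by
    rw [Matrix.trace_mul_comm, mul_assoc, ← mul_assoc u, ← hu, mul_assoc q, huv, mul_one, t0']
  have e6 : q * v * (q * (u * z)) = q * z := by
    rw [hv, mul_assoc v, ← mul_assoc q q, hq, ← mul_assoc q, hu, mul_assoc u, ← mul_assoc, hvu,
      one_mul]
  have e3 : (1 - q) * (q * (u * z)) = 0 := by
    rw [← mul_assoc, sub_mul, hq]; simp
  have : (1 - q + q * v) * (-q' + (q' * u + q * (u * z))) =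
      -q' + q * q' + (1 - q) * q' * u + (1 - q) * (q * (u * z)) - q * v * q' + q * v * (q' * u)
        + q * v * (q * (u * z)) := by noncomm_ring
  rw [this, e6, e3]
  simp only [Matrix.trace_add, Matrix.trace_sub, Matrix.trace_neg, Matrix.trace_zero, t0, t1, t2,
    t4, t5]
  ring

theorem trace_mul_deriv_connection {q qs qt qst : Matrix n n ℂ} (hq : q * q = q) :
    (q * (qst * q + qs * qt - (qt * qs + q * qst))).trace = (q * (qs * qt - qt * qs)).trace := by
  have e : q * (qst * q + qs * qt - (qt * qs + q * qst)) =
      q * (qs * qt - qt * qs) + (q * qst * q - q * q * qst) := by noncomm_ring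
  have h : (q * qst * q).trace = (q * qst).trace := by
    rw [Matrix.trace_mul_comm, ← mul_assoc, hq]
  rw [e, Matrix.trace_add, Matrix.trace_sub, h, hq, sub_self, add_zero]

/-- A nonvanishing solution of `h' = φ h` with `h 1 = h 0` has `∫₀¹ φ ∈ 2πiℤ`. -/
theorem integral_logDeriv_of_periodic {h φ : ℝ → ℂ} (cφ : Continuous φ)
    (hh : ∀ t, HasDerivAt h (φ t * h t) t) (hper : h 1 = h 0) (hne : h 0 ≠ 0) :
    ∃ m : ℤ, ∫ t in (0 : ℝ)..1, φ t = m * (2 * π * Complex.I) := by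
  have hconst : ∀ t, HasDerivAt (fun t => h t * Complex.exp (-∫ τ in (0 : ℝ)..t, φ τ)) 0 t :=
    fun t => by
      have hΦ : HasDerivAt (fun t => ∫ τ in (0 : ℝ)..t, φ τ) (φ t) t :=
        intervalIntegral.integral_hasDerivAt_right (cφ.intervalIntegrable 0 t)
          (cφ.stronglyMeasurableAtFilter _ _) cφ.continuousAt
      refine ((hh t).fun_mul hΦ.fun_neg.cexp).congr_deriv ?_
      ring
  have heq := is_const_of_deriv_eq_zero (fun t => (hconst t).differentiableAt)
    (fun t => (hconst t).deriv) 1 0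
  simp only [hper, intervalIntegral.integral_same, neg_zero, Complex.exp_zero] at heq
  have hexp1 := mul_left_cancel₀ hne heq
  rw [Complex.exp_neg, inv_eq_one, Complex.exp_eq_one_iff] at hexp1
  exact hexp1

/-- Parallel transport along the first variable: the holonomy `W` of the connection `[∂ₛQ, Q]`, with
inverse `W'`, and its logarithmic derivative `Z` in the second variable. -/
theorem exists_holonomy {Q Qs Qt Qst : ℝ → ℝ → Matrix n n ℂ}
    (hQ : ∀ s t, Q s t * Q s t = Q s t)
    (hQs : ∀ t s, HasDerivAt (Q · t) (Qs s t) s) (hQt : ∀ s t, HasDerivAt (Q s) (Qt s t) t)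
    (hQst : ∀ s t, HasDerivAt (Qs s) (Qst s t) t)
    (cQ : Continuous fun p : ℝ × ℝ => Q p.1 p.2) (cQs : Continuous fun p : ℝ × ℝ => Qs p.1 p.2)
    (cQt : Continuous fun p : ℝ × ℝ => Qt p.1 p.2)
    (cQst : Continuous fun p : ℝ × ℝ => Qst p.1 p.2)
    (pQ₁ : ∀ s t, Q (s + 1) t = Q s t) (pQ₂ : ∀ s t, Q s (t + 1) = Q s t)
    (pQs₁ : ∀ s t, Qs (s + 1) t = Qs s t) (pQs₂ : ∀ s t, Qs s (t + 1) = Qs s t)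
    (pQt₁ : ∀ s t, Qt (s + 1) t = Qt s t) (pQt₂ : ∀ s t, Qt s (t + 1) = Qt s t)
    (pQst₁ : ∀ s t, Qst (s + 1) t = Qst s t) (pQst₂ : ∀ s t, Qst s (t + 1) = Qst s t) :
    ∃ W W' Z : ℝ → Matrix n n ℂ, (∀ t, W' t * W t = 1) ∧ (∀ t, Q 0 t * W t = W t * Q 0 t) ∧
      (∀ t, HasDerivAt W (W t * Z t) t) ∧ W 1 = W 0 ∧
      ∀ t, (Q 0 t * Z t).trace =
        ∫ s in (0 : ℝ)..1, (Q s t * (Qs s t * Qt s t - Qt s t * Qs s t)).trace := by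
  let K : ℝ → ℝ → Matrix n n ℂ := fun s t => Qs s t * Q s t - Q s t * Qs s t
  let Kt : ℝ → ℝ → Matrix n n ℂ := fun s t =>
    Qst s t * Q s t + Qs s t * Qt s t - (Qt s t * Qs s t + Q s t * Qst s t)
  have cK : Continuous fun p : ℝ × ℝ => K p.1 p.2 := (cQs.mul cQ).sub (cQ.mul cQs)
  have cKt : Continuous fun p : ℝ × ℝ => Kt p.1 p.2 :=
    ((cQst.mul cQ).add (cQs.mul cQt)).sub ((cQt.mul cQs).add (cQ.mul cQst))
  have hKt : ∀ s t, HasDerivAt (K s) (Kt s t) t := fun s t =>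
    ((hQst s t).fun_mul (hQt s t)).fun_sub ((hQt s t).fun_mul (hQst s t))
  obtain ⟨C, hC⟩ := exists_bound_of_periodic cK (fun s t => by simp only [K, pQ₁, pQs₁])
    (fun s t => by simp only [K, pQ₂, pQs₂])
  obtain ⟨D, hD⟩ := exists_bound_of_periodic cKt
    (fun s t => by simp only [Kt, pQ₁, pQs₁, pQt₁, pQst₁])
    (fun s t => by simp only [Kt, pQ₂, pQs₂, pQt₂, pQst₂])
  choose! prop pinv hp0 hp hpinv hpp hpB hpinvB using
    fun (k : ℝ → Matrix n n ℂ) (hk : Continuous k ∧ ∀ s, ‖k s‖ ≤ C) => exists_propagator hk.1 hk.2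
  have hk : ∀ t, Continuous (K · t) ∧ ∀ s, ‖K s t‖ ≤ C := fun t =>
    ⟨cK.comp (Continuous.prodMk_left t), fun s => hC s t⟩
  let U : ℝ → ℝ → Matrix n n ℂ := fun s t => prop (K · t) s
  let V : ℝ → ℝ → Matrix n n ℂ := fun s t => pinv (K · t) s
  have hU0 : ∀ t, U 0 t = 1 := fun t => hp0 _ (hk t)
  have hU : ∀ t s, HasDerivAt (U · t) (K s t * U s t) s := fun t => hp _ (hk t)
  have hV : ∀ t s, HasDerivAt (V · t) (-(V s t * K s t)) s := fun t => hpinv _ (hk t)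
  have hVU : ∀ s t, V s t * U s t = 1 := fun s t => hpp _ (hk t) s
  have hUV : ∀ s t, U s t * V s t = 1 := fun s t => mul_eq_one_comm.1 (hVU s t)
  have hC0 : 0 ≤ C := (norm_nonneg _).trans (hC 0 0)
  have hexp : ∀ s ∈ Icc (0 : ℝ) 1, ‖(1 : Matrix n n ℂ)‖ * Real.exp (C * |s|) ≤
      ‖(1 : Matrix n n ℂ)‖ * Real.exp C := fun s hs => by
    gcongr
    rw [abs_of_nonneg hs.1]
    exact mul_le_of_le_one_right hC0 hs.2
  choose Z hU1 hτ using hasDerivAt_propagator cK cKt hKt hU0 hU hV hVU hUV hC hD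
    (fun s hs t => (hpB _ (hk t) s).trans (hexp s hs))
    (fun s hs t => (hpinvB _ (hk t) s).trans (hexp s hs))
  have hQU : ∀ s t, Q s t * U s t = U s t * Q 0 t := fun s t =>
    propagator_intertwines (fun s => hQ s t) (hQs t) (hU0 t) (hU t) (hV t) (hVU · t) (hUV · t) s
  have hZ : ∀ t, (Q 0 t * Z t).trace =
      ∫ s in (0 : ℝ)..1, (Q s t * (Qs s t * Qt s t - Qt s t * Qs s t)).trace := fun t => by
    refine (hτ t (LinearMap.toContinuousLinearMap
      (Matrix.traceLinearMap n ℝ ℂ ∘ₗ LinearMap.mulLeft ℝ (Q 0 t)))).trans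
      (intervalIntegral.integral_congr fun s _ => ?_)
    change (Q 0 t * (V s t * Kt s t * U s t)).trace = _
    rw [← trace_mul_deriv_connection (qst := Qst s t) (hQ s t), Matrix.trace_mul_comm,
      mul_assoc _ (U s t), ← hQU, Matrix.trace_mul_comm, mul_assoc, ← mul_assoc (U s t), hUV,
      one_mul]
  refine ⟨U 1, V 1, Z, hVU 1, fun t => ?_, hU1, ?_, hZ⟩
  · rw [← hQU, show Q 1 t = Q 0 t by simpa using pQ₁ 0 t]
  · have hK : (K · 1) = (K · 0) := funext fun s => by
      have a := pQ₂ s 0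
      have b := pQs₂ s 0
      rw [zero_add] at a b
      simp only [K, a, b]
    simp only [U, hK]

/-- Integrality of the Chern number for a family of idempotents which is `1`-periodic in both
variables: the determinant of the holonomy along the first variable is a periodic function of the
second one, with logarithmic derivative the integrated curvature. -/
theorem chern_number_unit_square {Q Qs Qt Qst : ℝ → ℝ → Matrix n n ℂ}
    (hQ : ∀ s t, Q s t * Q s t = Q s t)
    (hQs : ∀ t s, HasDerivAt (Q · t) (Qs s t) s) (hQt : ∀ s t, HasDerivAt (Q s) (Qt s t) t)
    (hQst : ∀ s t, HasDerivAt (Qs s) (Qst s t) t)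
    (cQ : Continuous fun p : ℝ × ℝ => Q p.1 p.2) (cQs : Continuous fun p : ℝ × ℝ => Qs p.1 p.2)
    (cQt : Continuous fun p : ℝ × ℝ => Qt p.1 p.2)
    (cQst : Continuous fun p : ℝ × ℝ => Qst p.1 p.2)
    (pQ₁ : ∀ s t, Q (s + 1) t = Q s t) (pQ₂ : ∀ s t, Q s (t + 1) = Q s t)
    (pQs₁ : ∀ s t, Qs (s + 1) t = Qs s t) (pQs₂ : ∀ s t, Qs s (t + 1) = Qs s t)
    (pQt₁ : ∀ s t, Qt (s + 1) t = Qt s t) (pQt₂ : ∀ s t, Qt s (t + 1) = Qt s t)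
    (pQst₁ : ∀ s t, Qst (s + 1) t = Qst s t) (pQst₂ : ∀ s t, Qst s (t + 1) = Qst s t) :
    ∃ m : ℤ, ∫ t in (0 : ℝ)..1, ∫ s in (0 : ℝ)..1,
      (Q s t * (Qs s t * Qt s t - Qt s t * Qs s t)).trace = m * (2 * π * Complex.I) := by
  obtain ⟨W, W', Z, hW'W, hcomm, hW, hW1, hZ⟩ := exists_holonomy hQ hQs hQt hQst cQ cQs cQt cQst
    pQ₁ pQ₂ pQs₁ pQs₂ pQt₁ pQt₂ pQst₁ pQst₂
  have cφ : Continuous fun t => ∫ s in (0 : ℝ)..1,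
      (Q s t * (Qs s t * Qt s t - Qt s t * Qs s t)).trace := by
    refine intervalIntegral.continuous_parametric_intervalIntegral_of_continuous'
      (f := fun t s => (Q s t * (Qs s t * Qt s t - Qt s t * Qs s t)).trace) ?_ 0 1
    exact ((cQ.mul ((cQs.mul cQt).sub (cQt.mul cQs))).matrix_trace).comp continuous_swap
  have hcomm' : ∀ t, Q 0 t * W' t = W' t * Q 0 t := fun t => by
    calc Q 0 t * W' t = W' t * (W t * Q 0 t) * W' t := by
          rw [← mul_assoc, hW'W, one_mul]
      _ = W' t * Q 0 t := by
          rw [← hcomm, mul_assoc, mul_assoc, mul_eq_one_comm.1 (hW'W t), mul_one]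
  have hinv : ∀ t, (1 - Q 0 t + Q 0 t * W' t) * (1 - Q 0 t + Q 0 t * W t) = 1 := fun t =>
    holonomy_inv_mul (hQ 0 t) (hcomm t) (hcomm' t) (hW'W t)
  refine integral_logDeriv_of_periodic (h := fun t => (1 - Q 0 t + Q 0 t * W t).det) cφ
    (fun t => ?_) ?_ fun h0 => ?_
  · have hM := ((hQt 0 t).const_sub 1).fun_add ((hQt 0 t).fun_mul (hW t))
    have := hasDerivAt_det hM (hinv t)
    rwa [trace_logDeriv_holonomy (hQ 0 t) ((hQt 0 t).eq_of_isIdempotent (hQ 0)) (hcomm t)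
      (hcomm' t) (hW'W t), hZ] at this
  · simp only [hW1, show Q 0 1 = Q 0 0 by simpa using pQ₂ 0 0]
  · have := congrArg Matrix.det (hinv 0)
    rw [Matrix.det_mul, Matrix.det_one] at this
    exact one_ne_zero (this.symm.trans (mul_eq_zero_of_right _ h0))

end MatrixCase

/-- Integrality of the Chern number of a smooth family of idempotents on the standard torus. -/
theorem chern_number_standard_torus {N : ℕ} {R : ℝ × ℝ → Matrix (Fin N) (Fin N) ℂ}
    (hR : ContDiff ℝ (⊤ : ℕ∞) R) (hp₁ : ∀ x, R (x + (1, 0)) = R x)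
    (hp₂ : ∀ x, R (x + (0, 1)) = R x) (hproj : ∀ x, R x * R x = R x) :
    ∃ m : ℤ, ∫ x in Ico (0 : ℝ) 1 ×ˢ Ico (0 : ℝ) 1,
      (R x * (fderiv ℝ R x (1, 0) * fderiv ℝ R x (0, 1)
        - fderiv ℝ R x (0, 1) * fderiv ℝ R x (1, 0))).trace = m * (2 * π * Complex.I) := by
  have hD : ∀ v : ℝ × ℝ, ContDiff ℝ (⊤ : ℕ∞) fun x => fderiv ℝ R x v := fun v =>
    (hR.fderiv_right le_rfl).clm_apply contDiff_const
  have h₁ : ∀ {F : ℝ × ℝ → Matrix (Fin N) (Fin N) ℂ}, ContDiff ℝ (⊤ : ℕ∞) F → ∀ t s,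
      HasDerivAt (fun s => F (s, t)) (fderiv ℝ F (s, t) (1, 0)) s := fun hF t s =>
    ((hF.differentiable (by simp)) (s, t)).hasFDerivAt.comp_hasDerivAt s
      ((hasDerivAt_id s).prodMk (hasDerivAt_const s t))
  have h₂ : ∀ {F : ℝ × ℝ → Matrix (Fin N) (Fin N) ℂ}, ContDiff ℝ (⊤ : ℕ∞) F → ∀ s t,
      HasDerivAt (fun t => F (s, t)) (fderiv ℝ F (s, t) (0, 1)) t := fun hF s t =>
    ((hF.differentiable (by simp)) (s, t)).hasFDerivAt.comp_hasDerivAt t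
      ((hasDerivAt_const t s).prodMk (hasDerivAt_id t))
  have per : ∀ {F : ℝ × ℝ → Matrix (Fin N) (Fin N) ℂ} {a : ℝ × ℝ}, (∀ x, F (x + a) = F x) →
      ∀ v x, fderiv ℝ F (x + a) v = fderiv ℝ F x v := fun {F a} hF v x => by
    have h := fderiv_comp_add_right (𝕜 := ℝ) (f := F) (x := x) a
    simp only [hF] at h
    exact (DFunLike.congr_fun h v).symm
  have e₁ : ∀ s t : ℝ, ((s + 1, t) : ℝ × ℝ) = (s, t) + (1, 0) := fun s t => by simp
  have e₂ : ∀ s t : ℝ, ((s, t + 1) : ℝ × ℝ) = (s, t) + (0, 1) := fun s t => by simp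
  obtain ⟨m, hm⟩ := chern_number_unit_square
    (Q := fun s t => R (s, t)) (Qs := fun s t => fderiv ℝ R (s, t) (1, 0))
    (Qt := fun s t => fderiv ℝ R (s, t) (0, 1))
    (Qst := fun s t => fderiv ℝ (fun x => fderiv ℝ R x (1, 0)) (s, t) (0, 1))
    (fun s t => hproj _) (h₁ hR) (h₂ hR) (h₂ (hD _)) hR.continuous (hD _).continuous
    (hD _).continuous (((hD (1, 0)).fderiv_right (m := (⊤ : ℕ∞)) le_rfl).continuous.clm_apply
      continuous_const)
    (fun s t => by rw [e₁, hp₁]) (fun s t => by rw [e₂, hp₂])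
    (fun s t => by rw [e₁, per hp₁]) (fun s t => by rw [e₂, per hp₂])
    (fun s t => by rw [e₁, per hp₁]) (fun s t => by rw [e₂, per hp₂])
    (fun s t => by rw [e₁, per (per hp₁ _)]) (fun s t => by rw [e₂, per (per hp₂ _)])
  refine ⟨m, ?_⟩
  rw [← hm]
  set f : ℝ × ℝ → ℂ := fun x => (R x * (fderiv ℝ R x (1, 0) * fderiv ℝ R x (0, 1)
    - fderiv ℝ R x (0, 1) * fderiv ℝ R x (1, 0))).trace
  have cf : Continuous f :=
    (hR.continuous.matrix_mul (((hD _).continuous.matrix_mul (hD _).continuous).sub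
      ((hD _).continuous.matrix_mul (hD _).continuous))).matrix_trace
  have f_int : IntegrableOn f (Ico (0 : ℝ) 1 ×ˢ Ico (0 : ℝ) 1) (volume.prod volume) :=
    (cf.continuousOn.integrableOn_compact (isCompact_Icc.prod isCompact_Icc)).mono_set
      (prod_mono Ico_subset_Icc_self Ico_subset_Icc_self)
  have hswap := setIntegral_prod_swap (Ico (0 : ℝ) 1) (Ico (0 : ℝ) 1) (μ := volume) (ν := volume) f
  rw [Measure.volume_eq_prod, ← hswap, setIntegral_prod (fun z => f z.swap) f_int.swap]
  simp only [intervalIntegral.integral_of_le zero_le_one, integral_Ico_eq_integral_Ioc]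
  rfl

/-- The linear map sending the standard basis of `ℝ²` to `b₁, b₂`. -/
noncomputable def latticeMap (b₁ b₂ : ℝ × ℝ) : ℝ × ℝ →L[ℝ] ℝ × ℝ :=
  (ContinuousLinearMap.fst ℝ ℝ ℝ).smulRight b₁ + (ContinuousLinearMap.snd ℝ ℝ ℝ).smulRight b₂

theorem latticeMap_apply (b₁ b₂ x : ℝ × ℝ) : latticeMap b₁ b₂ x = x.1 • b₁ + x.2 • b₂ := rfl

theorem det_latticeMap (b₁ b₂ : ℝ × ℝ) :
    (latticeMap b₁ b₂).det = b₁.1 * b₂.2 - b₁.2 * b₂.1 := by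
  rw [ContinuousLinearMap.det, ← LinearMap.det_toMatrix (Module.Basis.finTwoProd ℝ),
    Matrix.det_fin_two]
  simp [LinearMap.toMatrix_apply, latticeMap_apply]
  ring

theorem latticeMap_injective {b₁ b₂ : ℝ × ℝ} (hb : LinearIndependent ℝ ![b₁, b₂]) :
    Function.Injective (latticeMap b₁ b₂) := by
  rw [injective_iff_map_eq_zero]
  intro x hx
  have := LinearIndependent.pair_iff.1 hb x.1 x.2 hx
  exact Prod.ext this.1 this.2

/-- The curvature form transforms under a linear change of coordinates by the determinant. -/
theorem trace_curvature_change {n : Type*} [Fintype n] (p x y : Matrix n n ℂ) (a b c d : ℝ) :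
    (p * ((a • x + b • y) * (c • x + d • y) - (c • x + d • y) * (a • x + b • y))).trace =
      (a * d - b * c : ℝ) • (p * (x * y - y * x)).trace := by
  rw [← Matrix.trace_smul, ← mul_smul_comm]
  congr 2
  simp only [add_mul, mul_add, smul_mul_assoc, mul_smul_comm, smul_sub, sub_smul]
  module

/-- Integrality of the first Chern number of a smooth, doubly periodic family
of Hermitian projections `P(k)` on the two-torus: the integral
`(1/(2πi)) ∫_B Tr(P [∂₁P, ∂₂P]) dk` over a fundamental domain `B` is an integer. -/
theorem chern_number_integral (N : ℕ) (hN : 1 ≤ N) (b₁ b₂ : ℝ × ℝ)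
    (hb : LinearIndependent ℝ ![b₁, b₂])
    (P : ℝ × ℝ → Matrix (Fin N) (Fin N) ℂ)
    (hsmooth : ContDiff ℝ (⊤ : ℕ∞) P)
    (hper₁ : ∀ k, P (k + b₁) = P k) (hper₂ : ∀ k, P (k + b₂) = P k)
    (hproj : ∀ k, P k * P k = P k)
    (hherm : ∀ k, (P k)ᴴ = P k) :
    ∃ m : ℤ,
      (1 / (2 * (π : ℂ) * Complex.I)) *
        ∫ k in {x : ℝ × ℝ | ∃ s₁ s₂ : ℝ, s₁ ∈ Set.Ico (0:ℝ) 1 ∧ s₂ ∈ Set.Ico (0:ℝ) 1 ∧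
            x = s₁ • b₁ + s₂ • b₂},
          Matrix.trace (P k *
            (fderiv ℝ P k (1, 0) * fderiv ℝ P k (0, 1)
              - fderiv ℝ P k (0, 1) * fderiv ℝ P k (1, 0)))
      = (m : ℂ) := by
  let L := latticeMap b₁ b₂
  let d : ℝ := b₁.1 * b₂.2 - b₁.2 * b₂.1
  let f : ℝ × ℝ → ℂ := fun k => Matrix.trace (P k *
    (fderiv ℝ P k (1, 0) * fderiv ℝ P k (0, 1) - fderiv ℝ P k (0, 1) * fderiv ℝ P k (1, 0)))
  have hL₁ : L (1, 0) = b₁ := by simp [L, latticeMap_apply]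
  have hL₂ : L (0, 1) = b₂ := by simp [L, latticeMap_apply]
  obtain ⟨m, hm⟩ := chern_number_standard_torus (R := fun x => P (L x))
    (hsmooth.comp L.contDiff) (fun x => by rw [map_add, hL₁, hper₁])
    (fun x => by rw [map_add, hL₂, hper₂]) (fun x => hproj _)
  have hfd : ∀ x v, fderiv ℝ (fun x => P (L x)) x v = fderiv ℝ P (L x) (L v) := fun x v => by
    have h := ((hsmooth.differentiable (by simp)) (L x)).hasFDerivAt.comp x L.hasFDerivAt
    exact congrArg (· v) h.fderiv
  have hlin : ∀ (T : ℝ × ℝ →L[ℝ] Matrix (Fin N) (Fin N) ℂ) (b : ℝ × ℝ),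
      T b = b.1 • T (1, 0) + b.2 • T (0, 1) := fun T b => by
    rw [← map_smul, ← map_smul, ← map_add]
    simp
  have hcurv : ∀ x, (P (L x) * (fderiv ℝ (fun x => P (L x)) x (1, 0) *
      fderiv ℝ (fun x => P (L x)) x (0, 1) - fderiv ℝ (fun x => P (L x)) x (0, 1) *
        fderiv ℝ (fun x => P (L x)) x (1, 0))).trace = d • f (L x) := fun x => by
    rw [hfd, hfd, hL₁, hL₂, hlin _ b₁, hlin _ b₂]
    exact trace_curvature_change _ _ _ _ _ _ _
  simp only [hcurv, integral_smul] at hm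
  have hset : {x : ℝ × ℝ | ∃ s₁ s₂ : ℝ, s₁ ∈ Set.Ico (0:ℝ) 1 ∧ s₂ ∈ Set.Ico (0:ℝ) 1 ∧
      x = s₁ • b₁ + s₂ • b₂} = L '' (Set.Ico (0 : ℝ) 1 ×ˢ Set.Ico (0 : ℝ) 1) := by
    ext x
    constructor
    · rintro ⟨s₁, s₂, h₁, h₂, rfl⟩
      exact ⟨(s₁, s₂), ⟨h₁, h₂⟩, rfl⟩
    · rintro ⟨⟨s₁, s₂⟩, ⟨h₁, h₂⟩, rfl⟩
      exact ⟨s₁, s₂, h₁, h₂, rfl⟩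
  have hcv := integral_image_eq_integral_abs_det_fderiv_smul volume
    (measurableSet_Ico.prod measurableSet_Ico) (fun x _ => L.hasFDerivAt.hasFDerivWithinAt)
    ((latticeMap_injective hb).injOn (s := Set.Ico (0 : ℝ) 1 ×ˢ Set.Ico (0 : ℝ) 1)) f
  rw [det_latticeMap, integral_smul] at hcv
  rw [hset]
  have hpi : (2 * (π : ℂ) * Complex.I) ≠ 0 := Complex.two_pi_I_ne_zero
  rcases le_total 0 d with hd | hd
  · refine ⟨m, ?_⟩
    rw [hcv, abs_of_nonneg hd, hm]
    field_simp
  · refine ⟨-m, ?_⟩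
    rw [hcv, abs_of_nonpos hd, neg_smul, hm]
    push_cast
    field_simp
end

section
/- Homotopy invariance of the Chern number: let b₁, b₂ ∈ ℝ² be linearly independent, N ≥ 1, and let P : [0,1] × ℝ² → M_N(ℂ) be a jointly C^∞ map such that for every s ∈ [0,1] and k ∈ ℝ²: P(s, k + b₁) = P(s, k), P(s, k + b₂) = P(s, k), P(s, k)² = P(s, k), and P(s, k)* = P(s, k). Then the function s ↦ (1/(2πi)) ∫_B Tr( P(s,k) [∂₁P(s,k), ∂₂P(s,k)] ) dk is constant on [0,1], where B = {s₁b₁ + s₂b₂ : s₁, s₂ ∈ [0,1)} is a fundamental domain, ∂_i denotes the partial derivative in the i-th Cartesian coordinate of k, and [A, B] = AB − BA. -/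
open Real Complex MeasureTheory Matrix

attribute [local instance] Matrix.normedAddCommGroup Matrix.normedSpace

/-- If `A`, `B`, `C` are off-diagonal with respect to the idempotent `P`, then `Tr (A B C) = 0`. -/
lemma trace_mul_mul_eq_zero_of_offDiagonal {n : Type*} [Fintype n] [DecidableEq n]
    {P A B C : Matrix n n ℂ} (hP : P * P = P)
    (hA : A * P + P * A = A) (hB : B * P + P * B = B) (hC : C * P + P * C = C) :
    trace (A * B * C) = 0 := by
  have swap {X : Matrix n n ℂ} (hX : X * P + P * X = X) : X * P = (1 - P) * X := by
    rw [sub_mul, one_mul, eq_sub_iff_add_eq, hX]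
  have hABC : A * B * C * P = (1 - P) * (A * B * C) := by
    have hA' : A * (1 - P) = P * A := by
      rw [mul_sub, mul_one, sub_eq_iff_eq_add', hA]
    have hB' : B * (1 - P) = P * B := by
      rw [mul_sub, mul_one, sub_eq_iff_eq_add', hB]
    calc A * B * C * P = A * (B * (1 - P)) * C := by
          rw [mul_assoc _ C, swap hC]; noncomm_ring
      _ = A * P * B * C := by rw [hB']; noncomm_ring
      _ = (1 - P) * (A * B * C) := by rw [swap hA]; noncomm_ring
  have h₁ : trace (A * B * C * P) = 0 := by
    calc trace (A * B * C * P) = trace (A * B * C * P * P) := by rw [mul_assoc _ P, hP]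
      _ = trace ((1 - P) * (A * B * C * P)) := by rw [hABC, mul_assoc, hABC]
      _ = trace (A * B * C * (P * (1 - P))) := by rw [trace_mul_comm, mul_assoc]
      _ = 0 := by rw [mul_sub, mul_one, hP, sub_self, mul_zero, trace_zero]
  have h₂ := congrArg trace hABC
  rw [h₁, sub_mul, one_mul, trace_sub, trace_mul_comm P, h₁, sub_zero] at h₂
  exact h₂.symm

/-- The value `Tr (P [A, B])` of the Berry curvature at the projection `P`. -/
noncomputable def curvatureForm {n : Type*} [Fintype n] (P A B : Matrix n n ℂ) : ℂ :=
  trace (P * (A * B - B * A))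

section Calculus

variable {n : Type*} [Fintype n] [DecidableEq n]
  {E : Type*} [NormedAddCommGroup E] [NormedSpace ℝ E]

/-- Matrix multiplication as a continuous bilinear map. -/
noncomputable def matrixMulCLM (n : Type*) [Fintype n] [DecidableEq n] :
    Matrix n n ℂ →L[ℝ] Matrix n n ℂ →L[ℝ] Matrix n n ℂ :=
  LinearMap.toContinuousLinearMap
    (LinearMap.toContinuousLinearMap.toLinearMap ∘ₗ LinearMap.mul ℝ (Matrix n n ℂ))

lemma HasFDerivAt.exists_matrix_mul {f g : E → Matrix n n ℂ} {f' g' : E →L[ℝ] Matrix n n ℂ}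
    {x : E} (hf : HasFDerivAt f f' x) (hg : HasFDerivAt g g' x) :
    ∃ L : E →L[ℝ] Matrix n n ℂ, HasFDerivAt (fun y => f y * g y) L x ∧
      ∀ v, L v = f x * g' v + f' v * g x :=
  ⟨_, (matrixMulCLM n).hasFDerivAt_of_bilinear hf hg, fun _ => rfl⟩

lemma HasFDerivAt.exists_curvatureForm {f g h : E → Matrix n n ℂ}
    {f' g' h' : E →L[ℝ] Matrix n n ℂ} {x : E}
    (hf : HasFDerivAt f f' x) (hg : HasFDerivAt g g' x) (hh : HasFDerivAt h h' x) :
    ∃ L : E →L[ℝ] ℂ, HasFDerivAt (fun y => curvatureForm (f y) (g y) (h y)) L x ∧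
      ∀ v, L v = trace (f' v * (g x * h x - h x * g x)) +
        trace (f x * (g' v * h x + g x * h' v - h' v * g x - h x * g' v)) := by
  obtain ⟨L₁, hL₁, h₁⟩ := hg.exists_matrix_mul hh
  obtain ⟨L₂, hL₂, h₂⟩ := hh.exists_matrix_mul hg
  obtain ⟨L₃, hL₃, h₃⟩ : ∃ L : E →L[ℝ] Matrix n n ℂ,
      HasFDerivAt (fun y => g y * h y - h y * g y) L x ∧ ∀ v, L v = L₁ v - L₂ v :=
    ⟨_, hL₁.fun_sub hL₂, fun _ => rfl⟩
  obtain ⟨L, hL, hLv⟩ := hf.exists_matrix_mul hL₃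
  let T : Matrix n n ℂ →L[ℝ] ℂ := LinearMap.toContinuousLinearMap (traceLinearMap n ℝ ℂ)
  refine ⟨T.comp L, T.hasFDerivAt.comp x hL, fun v => ?_⟩
  change trace (L v) = _
  rw [hLv, h₃, h₁, h₂, ← trace_add]
  congr 1
  noncomm_ring

/-- The derivative of a family of idempotents is off-diagonal. -/
lemma HasFDerivAt.offDiagonal_of_idempotent {f : E → Matrix n n ℂ} {f' : E →L[ℝ] Matrix n n ℂ}
    {x : E} (hf : HasFDerivAt f f' x) (hproj : ∀ᶠ y in nhds x, f y * f y = f y) (v : E) :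
    f' v * f x + f x * f' v = f' v := by
  obtain ⟨L, hL, h⟩ := hf.exists_matrix_mul hf
  have hLf := hL.congr_of_eventuallyEq (f₁ := f) (hproj.mono fun y hy => hy.symm)
  rw [add_comm, ← h, hLf.unique hf]

/-- The curvature two-form of a smooth family of projections is closed. -/
lemma curvatureForm_closed {f : E → Matrix n n ℂ} {D : E → E →L[ℝ] Matrix n n ℂ}
    {D' : E →L[ℝ] E →L[ℝ] Matrix n n ℂ} {x : E}
    (hf : ∀ᶠ y in nhds x, HasFDerivAt f (D y) y) (hD : HasFDerivAt D D' x)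
    (hproj : ∀ᶠ y in nhds x, f y * f y = f y) (u v w : E) :
    DifferentiableAt ℝ (fun y => curvatureForm (f y) (D y v) (D y w)) x ∧
    fderiv ℝ (fun y => curvatureForm (f y) (D y v) (D y w)) x u +
      fderiv ℝ (fun y => curvatureForm (f y) (D y w) (D y u)) x v +
      fderiv ℝ (fun y => curvatureForm (f y) (D y u) (D y v)) x w = 0 := by
  have hfx := hf.self_of_nhds
  have hDv (z : E) : ∃ Dz : E →L[ℝ] Matrix n n ℂ,
      HasFDerivAt (fun y => D y z) Dz x ∧ ∀ y, Dz y = D' y z :=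
    ⟨_, (ContinuousLinearMap.apply ℝ (Matrix n n ℂ) z).hasFDerivAt.comp x hD, fun _ => rfl⟩
  choose D₂ hD₂ hD₂_apply using hDv
  have hsymm (y z : E) : D' y z = D' z y := second_derivative_symmetric_of_eventually hf hD y z
  have hoff := hfx.offDiagonal_of_idempotent hproj
  obtain ⟨L₁, hL₁, h₁⟩ := hfx.exists_curvatureForm (hD₂ v) (hD₂ w)
  obtain ⟨L₂, hL₂, h₂⟩ := hfx.exists_curvatureForm (hD₂ w) (hD₂ u)
  obtain ⟨L₃, hL₃, h₃⟩ := hfx.exists_curvatureForm (hD₂ u) (hD₂ v)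
  refine ⟨hL₁.differentiableAt, ?_⟩
  have hzero (a b c : E) : trace (D x a * (D x b * D x c - D x c * D x b)) = 0 := by
    rw [mul_sub, trace_sub, ← mul_assoc, ← mul_assoc,
      trace_mul_mul_eq_zero_of_offDiagonal hproj.self_of_nhds (hoff a) (hoff b) (hoff c),
      trace_mul_mul_eq_zero_of_offDiagonal hproj.self_of_nhds (hoff a) (hoff c) (hoff b), sub_zero]
  rw [hL₁.fderiv, hL₂.fderiv, hL₃.fderiv, h₁, h₂, h₃, hzero, hzero, hzero]
  simp only [hD₂_apply, zero_add, ← trace_add, ← mul_add]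
  rw [hsymm v u, hsymm w u, hsymm w v]
  convert trace_zero n ℂ
  rw [← mul_zero (f x)]
  congr 1
  abel

end Calculus

/-- For a divergence-free field on `[s₁, s₂] × [0, 1]²` whose fluxes through opposite lateral faces
agree, the fluxes through the two remaining faces agree. -/
lemma integral_face_eq_of_divergence_eq_zero {s₁ s₂ : ℝ} (hs : s₁ ≤ s₂)
    (F : Fin 3 → (Fin 3 → ℝ) → ℂ)
    (hc : ∀ i, ContinuousOn (F i) {x | x 0 ∈ Set.Icc s₁ s₂})
    (hd : ∀ x : Fin 3 → ℝ, x 0 ∈ Set.Ioo s₁ s₂ → ∀ i, DifferentiableAt ℝ (F i) x)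
    (hdiv : ∀ x : Fin 3 → ℝ, x 0 ∈ Set.Ioo s₁ s₂ →
      ∑ i, fderiv ℝ (F i) x (Pi.single i 1) = 0)
    (hper : ∀ i, i ≠ 0 → ∀ x : Fin 3 → ℝ, x 0 ∈ Set.Icc s₁ s₂ →
      F i (x + Pi.single i 1) = F i x) :
    ∫ t in Set.Icc (0 : Fin 2 → ℝ) 1, F 0 (Fin.cons s₁ t) =
      ∫ t in Set.Icc (0 : Fin 2 → ℝ) 1, F 0 (Fin.cons s₂ t) := by
  set a : Fin 3 → ℝ := Fin.cons s₁ 0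
  set b : Fin 3 → ℝ := Fin.cons s₂ 1
  have hab : a ≤ b := by
    intro i
    refine Fin.cases ?_ (fun j => ?_) i <;> simp [a, b, hs]
  have key := integral_divergence_of_hasFDerivAt_off_countable' a b hab F
    (fun i x => if x 0 ∈ Set.Ioo s₁ s₂ then fderiv ℝ (F i) x else 0) ∅ Set.countable_empty
    (fun i => (hc i).mono fun x hx => ⟨hx.1 0, hx.2 0⟩)
    (fun x hx i => by
      have hx0 : x 0 ∈ Set.Ioo s₁ s₂ := hx.1 0 (Set.mem_univ _)
      simpa only [if_pos hx0] using (hd x hx0 i).hasFDerivAt)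
  have hsum (x : Fin 3 → ℝ) : ∑ i, (if x 0 ∈ Set.Ioo s₁ s₂ then fderiv ℝ (F i) x else 0)
      (Pi.single i 1) = 0 := by
    split_ifs with hx
    · exact hdiv x hx
    · simp
  simp only [hsum, integral_zero] at key
  have key := key integrableOn_zero
  have hlat (i : Fin 3) (hi : i ≠ 0) :
      ∫ x in Set.Icc (a ∘ i.succAbove) (b ∘ i.succAbove), F i (i.insertNth (b i) x) =
      ∫ x in Set.Icc (a ∘ i.succAbove) (b ∘ i.succAbove), F i (i.insertNth (a i) x) := by
    refine setIntegral_congr_fun measurableSet_Icc fun x hx => ?_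
    obtain ⟨j, rfl⟩ := Fin.exists_succ_eq.2 hi
    have h0 : j.succ.succAbove 0 = 0 := by simp
    have hx0 : (j.succ.insertNth (a j.succ) x : Fin 3 → ℝ) 0 ∈ Set.Icc s₁ s₂ := by
      have h := Fin.insertNth_apply_succAbove (α := fun _ => ℝ) j.succ (a j.succ) x 0
      rw [h0] at h
      rw [h]
      have h₁ := hx.1 0
      have h₂ := hx.2 0
      simp only [Function.comp_apply, h0] at h₁ h₂
      exact ⟨h₁, h₂⟩
    rw [← hper j.succ hi _ hx0]
    congr 1
    ext k
    refine Fin.succAboveCases j.succ ?_ (fun l => ?_) k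
    · simp [a, b]
    · simp
  rw [Fin.sum_univ_succ, Finset.sum_eq_zero fun i _ => sub_eq_zero.2 (hlat _ (Fin.succ_ne_zero i)),
    add_zero] at key
  have hface : Set.Icc (a ∘ Fin.succAbove 0) (b ∘ Fin.succAbove 0) = Set.Icc 0 1 := rfl
  simpa only [hface, Fin.insertNth_zero', a, b, Fin.cons_zero] using (sub_eq_zero.1 key.symm).symm

lemma ContinuousOn.curvatureForm {n X : Type*} [Fintype n] [TopologicalSpace X]
    {f g h : X → Matrix n n ℂ} {s : Set X} (hf : ContinuousOn f s) (hg : ContinuousOn g s)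
    (hh : ContinuousOn h s) : ContinuousOn (fun x => curvatureForm (f x) (g x) (h x)) s := by
  unfold _root_.curvatureForm
  rw [continuousOn_iff_continuous_domRestrict] at *
  exact (hf.matrix_mul ((hg.matrix_mul hh).sub (hh.matrix_mul hg))).matrix_trace

lemma curvatureForm_linearCombination {n : Type*} [Fintype n] (P A B : Matrix n n ℂ)
    (a b c d : ℝ) :
    curvatureForm P (a • A + b • B) (c • A + d • B) = (a * d - b * c) * curvatureForm P A B := by
  have h : (a • A + b • B) * (c • A + d • B) - (c • A + d • B) * (a • A + b • B) =
      (a * d - b * c) • (A * B - B * A) := by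
    simp only [add_mul, mul_add, smul_mul_assoc, mul_smul_comm]
    module
  rw [curvatureForm, h, mul_smul_comm, trace_smul, Complex.real_smul, curvatureForm]
  push_cast
  rfl

/-- The slab `[0, 1] × ℝ²`. -/
def slab : Set (Fin 3 → ℝ) := {x | x 0 ∈ Set.Icc (0 : ℝ) 1}

lemma slab_mem_nhds {x : Fin 3 → ℝ} (hx : x 0 ∈ Set.Ioo (0 : ℝ) 1) : slab ∈ nhds x :=
  (continuous_apply 0).continuousAt.preimage_mem_nhds (Icc_mem_nhds hx.1 hx.2)

lemma uniqueDiffOn_slab : UniqueDiffOn ℝ slab := by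
  refine uniqueDiffOn_convex ?_ ⟨fun _ => 1 / 2, ?_⟩
  · exact (convex_Icc 0 1).linear_preimage (LinearMap.proj 0)
  · exact mem_interior_iff_mem_nhds.2 (slab_mem_nhds (by norm_num))

section Slab

open scoped Pointwise

variable {F : Type*} [NormedAddCommGroup F] [NormedSpace ℝ F] {f : (Fin 3 → ℝ) → F}

lemma continuousOn_fderivWithin_slab_apply (hf : ContDiffOn ℝ 2 f slab) (v : Fin 3 → ℝ) :
    ContinuousOn (fun x => fderivWithin ℝ f slab x v) slab :=
  (hf.continuousOn_fderivWithin uniqueDiffOn_slab (by norm_num)).clm_apply continuousOn_const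

lemma eventually_hasFDerivAt_fderivWithin_slab (hf : ContDiffOn ℝ 2 f slab) {x : Fin 3 → ℝ}
    (hx : x 0 ∈ Set.Ioo (0 : ℝ) 1) :
    ∀ᶠ y in nhds x, HasFDerivAt f (fderivWithin ℝ f slab y) y := by
  filter_upwards [eventually_mem_nhds_iff.2 (slab_mem_nhds hx)] with y hy
  exact ((hf.differentiableOn (by norm_num) y
    (mem_of_mem_nhds hy)).hasFDerivWithinAt).hasFDerivAt hy

lemma exists_hasFDerivAt_fderivWithin_slab (hf : ContDiffOn ℝ 2 f slab) {x : Fin 3 → ℝ}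
    (hx : x 0 ∈ Set.Ioo (0 : ℝ) 1) :
    ∃ D' : (Fin 3 → ℝ) →L[ℝ] (Fin 3 → ℝ) →L[ℝ] F, HasFDerivAt (fderivWithin ℝ f slab) D' x :=
  have hD : ContDiffOn ℝ 1 (fderivWithin ℝ f slab) slab :=
    hf.fderivWithin uniqueDiffOn_slab (by norm_num)
  ⟨_, ((hD.contDiffAt (slab_mem_nhds hx)).differentiableAt (by norm_num)).hasFDerivAt⟩

lemma fderivWithin_slab_add_single {i : Fin 3} (hi : i ≠ 0)
    (hper : ∀ x ∈ slab, f (x + Pi.single i 1) = f x) {x : Fin 3 → ℝ} (hx : x ∈ slab) :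
    fderivWithin ℝ f slab (x + Pi.single i 1) = fderivWithin ℝ f slab x := by
  have hslab : (Pi.single i 1 : Fin 3 → ℝ) +ᵥ slab = slab := by
    ext y
    rw [Set.mem_vadd_set_iff_neg_vadd_mem]
    simp [slab, hi.symm]
  have h := fderivWithin_comp_add_right (𝕜 := ℝ) (f := f) (s := slab) (x := x) (Pi.single i 1)
  rw [hslab] at h
  rw [← h]
  exact fderivWithin_congr hper (hper x hx)

end Slab

/-- For a smooth family of idempotents on the slab, periodic in the last two coordinates, the
integral of the curvature over the unit cell does not depend on the first coordinate. -/
lemma integral_curvatureForm_eq_of_periodic {n : Type*} [Fintype n] [DecidableEq n]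
    {f : (Fin 3 → ℝ) → Matrix n n ℂ} (hf : ContDiffOn ℝ 2 f slab)
    (hper : ∀ i, i ≠ 0 → ∀ x ∈ slab, f (x + Pi.single i 1) = f x)
    (hproj : ∀ x ∈ slab, f x * f x = f x) {s₁ s₂ : ℝ} (hs₁ : 0 ≤ s₁) (hs : s₁ ≤ s₂)
    (hs₂ : s₂ ≤ 1) :
    ∫ t in Set.Icc (0 : Fin 2 → ℝ) 1, curvatureForm (f (Fin.cons s₁ t))
        (fderivWithin ℝ f slab (Fin.cons s₁ t) (Pi.single 1 1))
        (fderivWithin ℝ f slab (Fin.cons s₁ t) (Pi.single 2 1)) =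
      ∫ t in Set.Icc (0 : Fin 2 → ℝ) 1, curvatureForm (f (Fin.cons s₂ t))
        (fderivWithin ℝ f slab (Fin.cons s₂ t) (Pi.single 1 1))
        (fderivWithin ℝ f slab (Fin.cons s₂ t) (Pi.single 2 1)) := by
  let D : (Fin 3 → ℝ) → (Fin 3 → ℝ) →L[ℝ] Matrix n n ℂ := fderivWithin ℝ f slab
  have hsub : {x : Fin 3 → ℝ | x 0 ∈ Set.Icc s₁ s₂} ⊆ slab :=
    fun x hx => ⟨hs₁.trans hx.1, hx.2.trans hs₂⟩
  have hDc (v : Fin 3 → ℝ) : ContinuousOn (fun x => D x v) slab :=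
    continuousOn_fderivWithin_slab_apply hf v
  have hclosed (x : Fin 3 → ℝ) (hx : x 0 ∈ Set.Ioo s₁ s₂) (u v w : Fin 3 → ℝ) :
      DifferentiableAt ℝ (fun y => curvatureForm (f y) (D y v) (D y w)) x ∧
      fderiv ℝ (fun y => curvatureForm (f y) (D y v) (D y w)) x u +
        fderiv ℝ (fun y => curvatureForm (f y) (D y w) (D y u)) x v +
        fderiv ℝ (fun y => curvatureForm (f y) (D y u) (D y v)) x w = 0 := by
    have hx' : x 0 ∈ Set.Ioo (0 : ℝ) 1 := ⟨hs₁.trans_lt hx.1, hx.2.trans_le hs₂⟩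
    obtain ⟨D', hD'⟩ := exists_hasFDerivAt_fderivWithin_slab hf hx'
    exact curvatureForm_closed (eventually_hasFDerivAt_fderivWithin_slab hf hx') hD'
      (Filter.mem_of_superset (slab_mem_nhds hx') hproj) u v w
  have hDper (i : Fin 3) (hi : i ≠ 0) (x : Fin 3 → ℝ) (hx : x ∈ slab) :
      D (x + Pi.single i 1) = D x :=
    fderivWithin_slab_add_single hi (hper i hi) hx
  refine integral_face_eq_of_divergence_eq_zero hs
    (fun i x => curvatureForm (f x) (D x (Pi.single (i + 1) 1)) (D x (Pi.single (i + 2) 1)))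
    (fun i => ?_) (fun x hx i => (hclosed x hx 0 _ _).1) (fun x hx => ?_) (fun i hi x hx => ?_)
  · exact (hf.continuousOn.curvatureForm (hDc _) (hDc _)).mono hsub
  · have h₁ : (1 : Fin 3) + 2 = 0 := rfl
    have h₂ : (2 : Fin 3) + 1 = 0 := rfl
    have h₃ : (2 : Fin 3) + 2 = 1 := rfl
    have h₄ : (1 : Fin 3) + 1 = 2 := rfl
    simp only [Fin.sum_univ_three, zero_add, h₁, h₂, h₃, h₄]
    exact (hclosed x hx (Pi.single 0 1) (Pi.single 1 1) (Pi.single 2 1)).2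
  · simp only [hper i hi x (hsub hx), hDper i hi x (hsub hx)]

/-- Integrals over the cell spanned by `b₁`, `b₂` are a constant multiple of integrals over the
unit square. -/
lemma exists_setIntegral_cell_eq (b₁ b₂ : ℝ × ℝ) (hb : LinearIndependent ℝ ![b₁, b₂]) :
    ∃ c : ℝ, ∀ f : ℝ × ℝ → ℂ,
      ∫ k in {x : ℝ × ℝ | ∃ t₁ t₂ : ℝ, t₁ ∈ Set.Ico (0:ℝ) 1 ∧ t₂ ∈ Set.Ico (0:ℝ) 1 ∧
            x = t₁ • b₁ + t₂ • b₂}, f k =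
        c • ∫ t in Set.Icc (0 : Fin 2 → ℝ) 1, f (t 0 • b₁ + t 1 • b₂) := by
  let B := basisOfLinearIndependentOfCardEqFinrank hb (by simp)
  let e : (Fin 2 → ℝ) ≃L[ℝ] ℝ × ℝ := B.equivFun.symm.toContinuousLinearEquiv
  have he (t : Fin 2 → ℝ) : e t = t 0 • b₁ + t 1 • b₂ := by
    simp [e, B, Module.Basis.equivFun_symm_apply, Fin.sum_univ_two]
  have hmap : (volume.map e).IsAddHaarMeasure := e.isAddHaarMeasure_map volume
  have hcell : e ⁻¹' {x : ℝ × ℝ | ∃ t₁ t₂ : ℝ, t₁ ∈ Set.Ico (0:ℝ) 1 ∧ t₂ ∈ Set.Ico (0:ℝ) 1 ∧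
      x = t₁ • b₁ + t₂ • b₂} =
      Set.univ.pi fun i => Set.Ico ((0 : Fin 2 → ℝ) i) ((1 : Fin 2 → ℝ) i) := by
    ext t
    constructor
    · rintro ⟨t₁, t₂, h₁, h₂, h⟩
      have ht : t = ![t₁, t₂] := e.injective (by rw [h, he]; simp)
      subst ht
      intro i _
      fin_cases i
      exacts [h₁, h₂]
    · intro h
      exact ⟨t 0, t 1, h 0 trivial, h 1 trivial, he t⟩
  refine ⟨Measure.addHaarScalarFactor volume (volume.map e), fun f => ?_⟩
  conv_lhs => rw [Measure.isAddLeftInvariant_eq_smul volume (volume.map e)]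
  have hemb : MeasurableEmbedding e := e.toHomeomorph.measurableEmbedding
  have hae : (Set.univ.pi fun i => Set.Ico ((0 : Fin 2 → ℝ) i) ((1 : Fin 2 → ℝ) i))
      =ᵐ[volume] Set.Icc (0 : Fin 2 → ℝ) 1 := Measure.univ_pi_Ico_ae_eq_Icc
  rw [Measure.restrict_smul, integral_smul_nnreal_measure,
    hemb.setIntegral_map, hcell,
    setIntegral_congr_set hae]
  simp only [he]
  rfl

lemma fderivWithin_slab_cons {F : Type*} [NormedAddCommGroup F] [NormedSpace ℝ F]
    {P : ℝ → ℝ × ℝ → F} {b₁ b₂ : ℝ × ℝ}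
    (hf : ContDiffOn ℝ 2 (fun x : Fin 3 → ℝ => P (x 0) (x 1 • b₁ + x 2 • b₂)) slab)
    (hsmooth : ContDiffOn ℝ (⊤ : ℕ∞) (fun p : ℝ × (ℝ × ℝ) => P p.1 p.2)
      (Set.Icc (0:ℝ) 1 ×ˢ (Set.univ : Set (ℝ × ℝ)))) {s : ℝ} (hs : s ∈ Set.Icc (0 : ℝ) 1)
    (t u : Fin 2 → ℝ) :
    fderivWithin ℝ (fun x : Fin 3 → ℝ => P (x 0) (x 1 • b₁ + x 2 • b₂)) slab (Fin.cons s t)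
      (Fin.cons 0 u) = fderiv ℝ (P s) (t 0 • b₁ + t 1 • b₂) (u 0 • b₁ + u 1 • b₂) := by
  have hPs : DifferentiableAt ℝ (P s) (t 0 • b₁ + t 1 • b₂) := by
    have h := (hsmooth.comp (contDiff_const.prodMk contDiff_id).contDiffOn
      (s := Set.univ) (f := fun k : ℝ × ℝ => (s, k)) fun k _ => ⟨hs, trivial⟩)
    exact (h.differentiableOn (by simp) _ trivial).differentiableAt Filter.univ_mem
  have hline : HasDerivAt (fun r : ℝ => t + r • u) u 0 := by
    simpa using ((hasDerivAt_id (0 : ℝ)).smul_const u).const_add t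
  have hcons : HasDerivAt (fun r : ℝ => (Fin.cons s (t + r • u) : Fin 3 → ℝ))
      (Fin.cons 0 u) 0 := by
    rw [hasDerivAt_pi] at hline ⊢
    intro i
    refine Fin.cases ?_ (fun j => ?_) i
    · simpa using hasDerivAt_const (0 : ℝ) s
    · simpa using hline j
  have hplane : HasDerivAt (fun r : ℝ => (t + r • u) 0 • b₁ + (t + r • u) 1 • b₂)
      (u 0 • b₁ + u 1 • b₂) 0 := by
    rw [hasDerivAt_pi] at hline
    exact ((hline 0).smul_const b₁).add ((hline 1).smul_const b₂)
  have hmem : (Fin.cons s t : Fin 3 → ℝ) ∈ slab := hs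
  have h₁ := HasFDerivWithinAt.comp_hasDerivAt (x := (0 : ℝ)) (t := slab)
    (f := fun r : ℝ => (Fin.cons s (t + r • u) : Fin 3 → ℝ)) (f' := Fin.cons 0 u)
    (l := fun x : Fin 3 → ℝ => P (x 0) (x 1 • b₁ + x 2 • b₂))
    (l' := fderivWithin ℝ (fun x : Fin 3 → ℝ => P (x 0) (x 1 • b₁ + x 2 • b₂)) slab
      (Fin.cons s t))
    (by simpa using (hf.differentiableOn (by norm_num) _ hmem).hasFDerivWithinAt) hcons
    (Filter.Eventually.of_forall fun _ => hs)
  have h₂ := HasFDerivAt.comp_hasDerivAt (x := (0 : ℝ))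
    (f := fun r : ℝ => (t + r • u) 0 • b₁ + (t + r • u) 1 • b₂) (l := P s)
    (l' := fderiv ℝ (P s) (t 0 • b₁ + t 1 • b₂)) (by simpa using hPs.hasFDerivAt) hplane
  exact h₁.unique h₂

/-- Homotopy invariance of the Chern number: for a jointly smooth family
`s ↦ P(s, ·)` of doubly periodic Hermitian projections over the two-torus, the Chern number
`(1/(2πi)) ∫_B Tr(P [∂₁P, ∂₂P]) dk` is constant in the deformation parameter `s ∈ [0,1]`. -/
theorem chern_number_homotopy_invariance (N : ℕ) (hN : 1 ≤ N) (b₁ b₂ : ℝ × ℝ)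
    (hb : LinearIndependent ℝ ![b₁, b₂])
    (P : ℝ → ℝ × ℝ → Matrix (Fin N) (Fin N) ℂ)
    (hsmooth : ContDiffOn ℝ (⊤ : ℕ∞) (fun p : ℝ × (ℝ × ℝ) => P p.1 p.2)
      (Set.Icc (0:ℝ) 1 ×ˢ (Set.univ : Set (ℝ × ℝ))))
    (hper₁ : ∀ s ∈ Set.Icc (0:ℝ) 1, ∀ k, P s (k + b₁) = P s k)
    (hper₂ : ∀ s ∈ Set.Icc (0:ℝ) 1, ∀ k, P s (k + b₂) = P s k)
    (hproj : ∀ s ∈ Set.Icc (0:ℝ) 1, ∀ k, P s k * P s k = P s k)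
    (hherm : ∀ s ∈ Set.Icc (0:ℝ) 1, ∀ k, (P s k)ᴴ = P s k) :
    ∀ s₁ ∈ Set.Icc (0:ℝ) 1, ∀ s₂ ∈ Set.Icc (0:ℝ) 1,
      (1 / (2 * (π : ℂ) * Complex.I)) *
        ∫ k in {x : ℝ × ℝ | ∃ t₁ t₂ : ℝ, t₁ ∈ Set.Ico (0:ℝ) 1 ∧ t₂ ∈ Set.Ico (0:ℝ) 1 ∧
            x = t₁ • b₁ + t₂ • b₂},
          Matrix.trace (P s₁ k *
            (fderiv ℝ (P s₁) k (1, 0) * fderiv ℝ (P s₁) k (0, 1)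
              - fderiv ℝ (P s₁) k (0, 1) * fderiv ℝ (P s₁) k (1, 0)))
      = (1 / (2 * (π : ℂ) * Complex.I)) *
        ∫ k in {x : ℝ × ℝ | ∃ t₁ t₂ : ℝ, t₁ ∈ Set.Ico (0:ℝ) 1 ∧ t₂ ∈ Set.Ico (0:ℝ) 1 ∧
            x = t₁ • b₁ + t₂ • b₂},
          Matrix.trace (P s₂ k *
            (fderiv ℝ (P s₂) k (1, 0) * fderiv ℝ (P s₂) k (0, 1)
              - fderiv ℝ (P s₂) k (0, 1) * fderiv ℝ (P s₂) k (1, 0))) := by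
  let M : (Fin 3 → ℝ) →L[ℝ] ℝ × (ℝ × ℝ) :=
    (ContinuousLinearMap.proj 0).prod
      ((ContinuousLinearMap.proj 1).smulRight b₁ + (ContinuousLinearMap.proj 2).smulRight b₂)
  let f : (Fin 3 → ℝ) → Matrix (Fin N) (Fin N) ℂ := fun x => P (x 0) (x 1 • b₁ + x 2 • b₂)
  have hf : ContDiffOn ℝ 2 f slab :=
    (hsmooth.comp (f := M) M.contDiff.contDiffOn (s := slab) fun x hx => ⟨hx, trivial⟩).of_le
      (WithTop.coe_le_coe.2 (le_top : (2 : ℕ∞) ≤ ⊤))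
  have hper (i : Fin 3) (hi : i ≠ 0) (x : Fin 3 → ℝ) (hx : x ∈ slab) :
      f (x + Pi.single i 1) = f x := by
    fin_cases i
    · exact absurd rfl hi
    · simpa [f, add_smul, add_right_comm] using hper₁ _ hx (x 1 • b₁ + x 2 • b₂)
    · simpa [f, add_smul, add_assoc] using hper₂ _ hx (x 1 • b₁ + x 2 • b₂)
  have hproj' (x : Fin 3 → ℝ) (hx : x ∈ slab) : f x * f x = f x := hproj _ hx _
  obtain ⟨c, hc⟩ := exists_setIntegral_cell_eq b₁ b₂ hb
  let δ : ℝ := b₁.1 * b₂.2 - b₁.2 * b₂.1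
  have hδ : (δ : ℂ) ≠ 0 := by
    rw [Complex.ofReal_ne_zero]
    intro h
    rw [LinearIndependent.pair_iff] at hb
    have h₁ := hb b₂.1 (-b₁.1) (by ext <;> simp <;> grind)
    have h₂ := hb b₂.2 (-b₁.2) (by ext <;> simp <;> grind)
    have := hb 1 0 (by ext <;> simp <;> grind)
    simp at this
  have hface (s : ℝ) (hs : s ∈ Set.Icc (0 : ℝ) 1) (t : Fin 2 → ℝ) :
      curvatureForm (f (Fin.cons s t)) (fderivWithin ℝ f slab (Fin.cons s t) (Pi.single 1 1))
        (fderivWithin ℝ f slab (Fin.cons s t) (Pi.single 2 1)) =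
      δ * curvatureForm (P s (t 0 • b₁ + t 1 • b₂))
        (fderiv ℝ (P s) (t 0 • b₁ + t 1 • b₂) (1, 0))
        (fderiv ℝ (P s) (t 0 • b₁ + t 1 • b₂) (0, 1)) := by
    have hdir (b : ℝ × ℝ) : fderiv ℝ (P s) (t 0 • b₁ + t 1 • b₂) b =
        b.1 • fderiv ℝ (P s) (t 0 • b₁ + t 1 • b₂) (1, 0) +
          b.2 • fderiv ℝ (P s) (t 0 • b₁ + t 1 • b₂) (0, 1) := by
      rw [← map_smul, ← map_smul, ← map_add]
      congr 1
      ext <;> simp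
    have h₁ : fderivWithin ℝ f slab (Fin.cons s t) (Pi.single 1 1) =
        fderiv ℝ (P s) (t 0 • b₁ + t 1 • b₂) b₁ := by
      have hsingle : (Pi.single 1 1 : Fin 3 → ℝ) = Fin.cons 0 ![1, 0] := by
        ext i; fin_cases i <;> rfl
      rw [hsingle]
      exact (fderivWithin_slab_cons hf hsmooth hs t ![1, 0]).trans (congrArg _ (by simp))
    have h₂ : fderivWithin ℝ f slab (Fin.cons s t) (Pi.single 2 1) =
        fderiv ℝ (P s) (t 0 • b₁ + t 1 • b₂) b₂ := by
      have hsingle : (Pi.single 2 1 : Fin 3 → ℝ) = Fin.cons 0 ![0, 1] := by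
        ext i; fin_cases i <;> rfl
      rw [hsingle]
      exact (fderivWithin_slab_cons hf hsmooth hs t ![0, 1]).trans (congrArg _ (by simp))
    rw [h₁, h₂, hdir b₁, hdir b₂, curvatureForm_linearCombination]
    simp only [δ]
    push_cast
    rfl
  have hle (s₁ s₂ : ℝ) (hs₁ : s₁ ∈ Set.Icc (0 : ℝ) 1) (hs₂ : s₂ ∈ Set.Icc (0 : ℝ) 1)
      (hs : s₁ ≤ s₂) := integral_curvatureForm_eq_of_periodic hf hper hproj' hs₁.1 hs hs₂.2
  intro s₁ hs₁ s₂ hs₂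
  rw [hc, hc]
  congr 2
  have key : ∫ t in Set.Icc (0 : Fin 2 → ℝ) 1, curvatureForm (f (Fin.cons s₁ t))
        (fderivWithin ℝ f slab (Fin.cons s₁ t) (Pi.single 1 1))
        (fderivWithin ℝ f slab (Fin.cons s₁ t) (Pi.single 2 1)) =
      ∫ t in Set.Icc (0 : Fin 2 → ℝ) 1, curvatureForm (f (Fin.cons s₂ t))
        (fderivWithin ℝ f slab (Fin.cons s₂ t) (Pi.single 1 1))
        (fderivWithin ℝ f slab (Fin.cons s₂ t) (Pi.single 2 1)) := by
    rcases le_total s₁ s₂ with h | h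
    · exact hle s₁ s₂ hs₁ hs₂ h
    · exact (hle s₂ s₁ hs₂ hs₁ h).symm
  simp only [hface s₁ hs₁, hface s₂ hs₂, integral_const_mul] at key
  exact mul_left_cancel₀ hδ key
end
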